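/- Let β ≥ 0 be real and let m ≥ n ≥ 0 and t ≥ s ≥ 0 be integers. Then ∫_ℂ z · Z^{(β)}_{m,n}(z, conj(z)) · conj(Z^{(β)}_{t,s}(z, conj(z))) dν(z) = 0 if t−s ≠ m−n+1, and if t−s = m−n+1 it equals [(−1)^{n+s} (−β−m)_n (−β−t)_s Γ(m−n+β+2)/(n!·s!)] · Σ_{j=0}^{n} Σ_{k=0}^{s} [(β+m−n+2)_{j+k} (−n)_j (−s)_k / ((β+m−n+1)_j (β+m−n+2)_k · j!·k!)]. -/

import Mathlib

open MeasureTheory Finset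

/-- Pochhammer symbol `(a)_j = a (a+1) ⋯ (a+j-1)`. -/
noncomputable def poch (a : ℝ) (j : ℕ) : ℝ := ∏ i ∈ Finset.range j, (a + i)

/-- The generalized 2D Laguerre polynomial `Z^{(β)}_{m,n}(z,w)` (for `m ≥ n`). -/
noncomputable def Zc (β : ℝ) (m n : ℕ) (z w : ℂ) : ℂ :=
  ∑ k ∈ Finset.range (n + 1),
    (((-1 : ℝ) ^ (n - k) * poch (β + 1) m /
        (k.factorial * (n - k).factorial * poch (β + 1) (m - k)) : ℝ) : ℂ) *
      z ^ (m - k) * w ^ (n - k)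

lemma poch_succ' (a : ℝ) (j : ℕ) : poch a (j + 1) = poch a j * (a + j) := by
  simp [poch, Finset.prod_range_succ]

lemma poch_add' (a : ℝ) (i j : ℕ) : poch a (i + j) = poch a i * poch (a + i) j := by
  simp only [poch, Finset.prod_range_add]
  congr 1
  apply Finset.prod_congr rfl
  intro x _
  push_cast
  ring

lemma poch_pos' (a : ℝ) (ha : 0 < a) (j : ℕ) : 0 < poch a j := by
  apply Finset.prod_pos
  intro i _
  positivity

lemma poch_neg' (a : ℝ) (n : ℕ) : poch (-a) n = (-1) ^ n * poch (a - n + 1) n := by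
  unfold poch
  rw [← Finset.prod_range_reflect (fun i : ℕ => (a - n + 1 + i : ℝ))]
  have hc : ((-1 : ℝ)) ^ n = ∏ _i ∈ Finset.range n, (-1 : ℝ) := by simp
  rw [hc, ← Finset.prod_mul_distrib]
  apply Finset.prod_congr rfl
  intro i hi
  have hi' : i + 1 ≤ n := Finset.mem_range.mp hi
  have : ((n - 1 - i : ℕ) : ℝ) = n - 1 - i := by
    rw [Nat.sub_sub, Nat.cast_sub (by omega)]
    push_cast
    ring
  rw [this]
  ring

lemma poch_negnat (n j : ℕ) (hj : j ≤ n) :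
    poch (-(n : ℝ)) j * (n - j).factorial = (-1) ^ j * n.factorial := by
  induction j with
  | zero => simp [poch]
  | succ j ih =>
    have h := ih (by omega)
    have e : n - j = (n - (j + 1)) + 1 := by omega
    rw [e, Nat.factorial_succ, ← e] at h
    rw [poch_succ', pow_succ]
    rw [Nat.cast_mul, Nat.cast_sub (by omega)] at h
    linear_combination -h

lemma Gamma_poch (a : ℝ) (ha : 0 < a) (j : ℕ) :
    Real.Gamma (a + j) = poch a j * Real.Gamma a := by
  induction j with
  | zero => simp [poch]
  | succ j ih =>
    have : 0 < a + j := by positivity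
    rw [poch_succ', Nat.cast_succ, ← add_assoc, Real.Gamma_add_one this.ne', ih]
    ring

lemma coef_eq (β : ℝ) (hβ : 0 ≤ β) (n d j : ℕ) (hj : j ≤ n) :
    (-1 : ℝ) ^ j * poch (β + 1) (d + n) /
        ((n - j).factorial * j.factorial * poch (β + 1) (d + j)) =
      ((-1) ^ n * poch (-β - (d + n : ℕ)) n / n.factorial) *
        (poch (-(n : ℝ)) j / (j.factorial * poch (β + d + 1) j)) := by
  have h1 := poch_negnat n j hj
  have h2 : poch (-β - (d + n : ℕ)) n = (-1) ^ n * poch (β + 1 + d) n := by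
    rw [show -β - ((d + n : ℕ) : ℝ) = -(β + (d + n : ℕ)) by ring, poch_neg']
    congr 2
    push_cast
    ring
  have h3 : ((-1 : ℝ) ^ n) * (-1) ^ n = 1 := by
    rw [← mul_pow]
    norm_num
  rw [h2, ← mul_assoc, h3, poch_add', poch_add', show β + d + 1 = β + 1 + d by ring]
  have p1 := (poch_pos' (β + 1) (by positivity) d).ne'
  have p2 := (poch_pos' (β + 1 + d) (by positivity) j).ne'
  have f1 : ((n - j).factorial : ℝ) ≠ 0 := by positivity
  field_simp
  linear_combination (-poch (β + 1 + d) n) * h1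

lemma Zc_eq (β : ℝ) (hβ : 0 ≤ β) (d n : ℕ) (z w : ℂ) :
    Zc β (d + n) n z w = (((-1) ^ n * poch (-β - (d + n : ℕ)) n / n.factorial : ℝ) : ℂ) *
      ∑ j ∈ Finset.range (n + 1),
        ((poch (-(n : ℝ)) j / (j.factorial * poch (β + d + 1) j) : ℝ) : ℂ) *
          z ^ (d + j) * w ^ j := by
  unfold Zc
  rw [← Finset.sum_range_reflect, Finset.mul_sum]
  apply Finset.sum_congr rfl
  intro j hj
  have hj' : j ≤ n := by
    have := Finset.mem_range.mp hj
    omega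
  have e1 : n + 1 - 1 - j = n - j := by omega
  have e2 : n - (n - j) = j := by omega
  have e3 : d + n - (n - j) = d + j := by omega
  rw [e1, e2, e3, coef_eq β hβ n d j hj']
  push_cast
  ring

noncomputable def wt (β : ℝ) (z : ℂ) : ℝ :=
  Real.pi⁻¹ * ‖z‖ ^ (2 * β) * Real.exp (-(‖z‖ ^ 2))

lemma wt_nonneg (β : ℝ) (z : ℂ) : 0 ≤ wt β z := by
  unfold wt
  have := Real.pi_pos
  positivity

lemma wt_meas (β : ℝ) : Measurable (wt β) := by
  unfold wt
  fun_prop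

lemma integral_norm_wt (β : ℝ) (hβ : 0 ≤ β) (p : ℕ) :
    ∫ z : ℂ, ‖z‖ ^ p * wt β z = Real.Gamma (β + p / 2 + 1) := by
  have h := Complex.integral_rpow_mul_exp_neg_rpow (p := 2) (q := p + 2 * β) (by norm_num)
    (by have : (0 : ℝ) ≤ p := by positivity
        linarith)
  have e : ∀ z : ℂ, ‖z‖ ^ p * wt β z =
      Real.pi⁻¹ * (‖z‖ ^ ((p : ℝ) + 2 * β) * Real.exp (-‖z‖ ^ (2 : ℝ))) := by
    intro z
    rw [Real.rpow_add_of_nonneg (norm_nonneg _) (by positivity) (by positivity)]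
    rw [Real.rpow_natCast, Real.rpow_two]
    unfold wt
    ring
  simp_rw [e]
  rw [integral_const_mul, h]
  have hpi := Real.pi_pos.ne'
  rw [show ((p : ℝ) + 2 * β + 2) / 2 = β + p / 2 + 1 by ring]
  field_simp

lemma integrable_norm_wt (β : ℝ) (hβ : 0 ≤ β) (p : ℕ) :
    Integrable (fun z : ℂ => ‖z‖ ^ p * wt β z) := by
  by_contra hc
  have h := integral_norm_wt β hβ p
  rw [integral_undef hc] at h
  have : 0 < Real.Gamma (β + p / 2 + 1) := Real.Gamma_pos_of_pos (by positivity)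
  linarith

lemma integrable_mon (β : ℝ) (hβ : 0 ≤ β) (a b : ℕ) :
    Integrable (fun z : ℂ => wt β z • (z ^ a * (starRingEnd ℂ z) ^ b)) := by
  refine (integrable_norm_wt β hβ (a + b)).mono' ?_ ?_
  · have h1 := wt_meas β
    have h2 : Measurable (fun z : ℂ => z ^ a * (starRingEnd ℂ z) ^ b) :=
      (by fun_prop : Continuous (fun z : ℂ => z ^ a * (starRingEnd ℂ z) ^ b)).measurable
    exact (h1.smul h2).aestronglyMeasurable
  · refine Filter.Eventually.of_forall fun z => ?_
    rw [norm_smul, norm_mul, norm_pow, norm_pow, RCLike.norm_conj, Real.norm_of_nonneg (wt_nonneg β z),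
      pow_add]
    exact le_of_eq (by ring)

lemma integral_mon_eq (β : ℝ) (hβ : 0 ≤ β) (a : ℕ) :
    ∫ z : ℂ, wt β z • (z ^ a * (starRingEnd ℂ z) ^ a) = (Real.Gamma (β + a + 1) : ℂ) := by
  have h := integral_norm_wt β hβ (2 * a)
  rw [show β + ((2 * a : ℕ) : ℝ) / 2 + 1 = β + a + 1 by push_cast; ring] at h
  rw [← h, ← integral_complex_ofReal]
  congr 1
  ext1 z
  rw [← mul_pow, Complex.mul_conj, Complex.normSq_eq_norm_sq, Complex.real_smul]
  push_cast
  ring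

lemma integral_mon_ne (β : ℝ) (a b : ℕ) (hab : a ≠ b) :
    ∫ z : ℂ, wt β z • (z ^ a * (starRingEnd ℂ z) ^ b) = 0 := by
  have hab' : ((a : ℝ) - b) ≠ 0 := sub_ne_zero.mpr (by exact_mod_cast hab)
  set θ : ℝ := Real.pi / ((a : ℝ) - b) with hθ
  set c : Circle := Circle.exp θ with hc
  have hcv : (c : ℂ) = Complex.exp (θ * Complex.I) := Circle.coe_exp θ
  have hm : (c : ℂ) ^ a * (starRingEnd ℂ (c : ℂ)) ^ b = -1 := by
    rw [hcv, ← Complex.exp_conj, ← Complex.exp_nat_mul, ← Complex.exp_nat_mul, ← Complex.exp_add]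
    rw [← Complex.exp_pi_mul_I]
    congr 1
    have : (Real.pi : ℂ) = θ * (a - b) := by
      have h : Real.pi = θ * ((a : ℝ) - b) := by rw [hθ]; field_simp
      exact_mod_cast h
    rw [this]
    simp
    ring
  have hn : ‖(c : ℂ)‖ = 1 := Circle.norm_coe c
  have h := (rotation c).measurePreserving.integral_comp
    (rotation c).toHomeomorph.measurableEmbedding
    (fun z : ℂ => wt β z • (z ^ a * (starRingEnd ℂ z) ^ b))
  have e : ∀ z : ℂ, wt β (rotation c z) • ((rotation c z) ^ a * (starRingEnd ℂ (rotation c z)) ^ b)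
      = - (wt β z • (z ^ a * (starRingEnd ℂ z) ^ b)) := by
    intro z
    rw [rotation_apply, map_mul, mul_pow, mul_pow,
      show wt β (c * z) = wt β z by unfold wt; rw [norm_mul, hn, one_mul], ← smul_neg]
    congr 1
    linear_combination (z ^ a * (starRingEnd ℂ z) ^ b) * hm
  simp_rw [e] at h
  rw [integral_neg] at h
  exact self_eq_neg.mp h.symm

/-- Double-sum expansion of the integral. -/
lemma integral_expand (β : ℝ) (hβ : 0 ≤ β) (d n d' s : ℕ) :
    ∫ z : ℂ, z * Zc β (d + n) n z (starRingEnd ℂ z) *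
          starRingEnd ℂ (Zc β (d' + s) s z (starRingEnd ℂ z)) ∂(volume.withDensity (fun z =>
      ENNReal.ofReal (Real.pi⁻¹ * ‖z‖ ^ (2 * β) * Real.exp (-(‖z‖ ^ 2))))) =
    (((-1) ^ n * poch (-β - (d + n : ℕ)) n / n.factorial : ℝ) : ℂ) *
    (((-1) ^ s * poch (-β - (d' + s : ℕ)) s / s.factorial : ℝ) : ℂ) *
    ∑ j ∈ Finset.range (n + 1), ∑ k ∈ Finset.range (s + 1),
      ((poch (-(n : ℝ)) j / (j.factorial * poch (β + d + 1) j) : ℝ) : ℂ) *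
      ((poch (-(s : ℝ)) k / (k.factorial * poch (β + d' + 1) k) : ℝ) : ℂ) *
      ∫ z : ℂ, wt β z • (z ^ (d + 1 + j + k) * (starRingEnd ℂ z) ^ (d' + j + k)) := by
  rw [integral_withDensity_eq_integral_toReal_smul
    (by have := (wt_meas β).ennreal_ofReal
        unfold wt at this
        exact this)
    (Filter.Eventually.of_forall fun z => ENNReal.ofReal_lt_top)]
  simp_rw [← integral_const_mul]
  have hint : ∀ j k : ℕ, Integrable (fun z : ℂ =>
      ((poch (-(n : ℝ)) j / (j.factorial * poch (β + d + 1) j) : ℝ) : ℂ) *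
      ((poch (-(s : ℝ)) k / (k.factorial * poch (β + d' + 1) k) : ℝ) : ℂ) *
      (wt β z • (z ^ (d + 1 + j + k) * (starRingEnd ℂ z) ^ (d' + j + k)))) :=
    fun j k => (integrable_mon β hβ _ _).const_mul _
  simp_rw [← integral_finsetSum _ (fun k _ => hint _ k)]
  rw [← integral_finsetSum _ (fun j _ => integrable_finsetSum _ (fun k _ => hint j k)),
    ← integral_const_mul]
  congr 1
  ext1 z
  have hw : (ENNReal.ofReal (Real.pi⁻¹ * ‖z‖ ^ (2 * β) * Real.exp (-(‖z‖ ^ 2)))).toReal = wt β z :=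
    ENNReal.toReal_ofReal (wt_nonneg β z)
  rw [hw, Zc_eq β hβ, Zc_eq β hβ, map_mul, map_sum]
  simp only [map_mul, map_pow, Complex.conj_ofReal, Complex.conj_conj, Complex.real_smul]
  generalize ((((-1) ^ n * poch (-β - (d + n : ℕ)) n / n.factorial : ℝ)) : ℂ) = A
  generalize ((((-1) ^ s * poch (-β - (d' + s : ℕ)) s / s.factorial : ℝ)) : ℂ) = B
  have hS := Finset.sum_mul_sum (Finset.range (n + 1)) (Finset.range (s + 1))
    (fun j => ((poch (-(n : ℝ)) j / (j.factorial * poch (β + d + 1) j) : ℝ) : ℂ) *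
      z ^ (d + j) * (starRingEnd ℂ z) ^ j)
    (fun k => ((poch (-(s : ℝ)) k / (k.factorial * poch (β + d' + 1) k) : ℝ) : ℂ) *
      (starRingEnd ℂ z) ^ (d' + k) * z ^ k)
  trans (wt β z : ℂ) * z * A * B * ((∑ j ∈ Finset.range (n + 1),
    ((poch (-(n : ℝ)) j / (j.factorial * poch (β + d + 1) j) : ℝ) : ℂ) *
      z ^ (d + j) * (starRingEnd ℂ z) ^ j) * ∑ k ∈ Finset.range (s + 1),
    ((poch (-(s : ℝ)) k / (k.factorial * poch (β + d' + 1) k) : ℝ) : ℂ) *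
      (starRingEnd ℂ z) ^ (d' + k) * z ^ k)
  · ring
  rw [hS]
  simp only [Finset.mul_sum]
  refine Finset.sum_congr rfl fun j _ => Finset.sum_congr rfl fun k _ => ?_
  ring

/-- Integral formula for `∫ z Z^{(β)}_{m,n}(z,z̄) conj(Z^{(β)}_{t,s}(z,z̄)) dν(z)`,
with `dν(z) = π⁻¹ |z|^{2β} e^{−|z|²} dA(z)`. -/
theorem laguerre2D_integral_z (β : ℝ) (hβ : 0 ≤ β) (m n t s : ℕ)
    (hmn : n ≤ m) (hts : s ≤ t)
    (ν : Measure ℂ)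
    (hν : ν = volume.withDensity (fun z =>
      ENNReal.ofReal (Real.pi⁻¹ * ‖z‖ ^ (2 * β) * Real.exp (-(‖z‖ ^ 2))))) :
    (((t : ℤ) - s ≠ (m : ℤ) - n + 1) →
      ∫ z : ℂ, z * Zc β m n z (starRingEnd ℂ z) *
          starRingEnd ℂ (Zc β t s z (starRingEnd ℂ z)) ∂ν = 0) ∧
    (((t : ℤ) - s = (m : ℤ) - n + 1) →
      ∫ z : ℂ, z * Zc β m n z (starRingEnd ℂ z) *
          starRingEnd ℂ (Zc β t s z (starRingEnd ℂ z)) ∂ν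
        = ((((-1 : ℝ) ^ (n + s) * poch (-β - m) n * poch (-β - t) s *
              Real.Gamma ((m : ℝ) - n + β + 2) / (n.factorial * s.factorial)) *
            ∑ j ∈ Finset.range (n + 1), ∑ k ∈ Finset.range (s + 1),
              poch (β + (m : ℝ) - n + 2) (j + k) * poch (-(n : ℝ)) j * poch (-(s : ℝ)) k /
                (poch (β + (m : ℝ) - n + 1) j * poch (β + (m : ℝ) - n + 2) k *
                  j.factorial * k.factorial) : ℝ) : ℂ)) := by
  subst hν
  obtain ⟨d, rfl⟩ : ∃ d, m = d + n := ⟨m - n, by omega⟩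
  obtain ⟨d', rfl⟩ : ∃ d, t = d + s := ⟨t - s, by omega⟩
  rw [integral_expand β hβ]
  constructor
  · intro h
    have hd : d' ≠ d + 1 := by
      rintro rfl
      apply h
      push_cast
      ring
    have : ∀ j k : ℕ, ∫ z : ℂ, wt β z •
        (z ^ (d + 1 + j + k) * (starRingEnd ℂ z) ^ (d' + j + k)) = 0 :=
      fun j k => integral_mon_ne β _ _ (by omega)
    simp only [this, mul_zero, Finset.sum_const_zero]
  · intro h
    obtain rfl : d' = d + 1 := by
      push_cast at h
      omega
    simp_rw [integral_mon_eq β hβ]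
    have hS : ∀ j k : ℕ, poch (-(n : ℝ)) j / (j.factorial * poch (β + d + 1) j) *
        (poch (-(s : ℝ)) k / (k.factorial * poch (β + (d + 1 : ℕ) + 1) k)) *
        Real.Gamma (β + (d + 1 + j + k : ℕ) + 1) = Real.Gamma (d + β + 2) *
        (poch (β + d + 2) (j + k) * poch (-(n : ℝ)) j * poch (-(s : ℝ)) k /
                (poch (β + d + 1) j * poch (β + d + 2) k *
                  j.factorial * k.factorial)) := by
      intro j k
      rw [show β + ((d + 1 + j + k : ℕ) : ℝ) + 1 = (d + β + 2) + (j + k : ℕ) by push_cast; ring,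
        Gamma_poch _ (by positivity),
        show β + ((d + 1 : ℕ) : ℝ) + 1 = β + d + 2 by push_cast; ring,
        show (d : ℝ) + β + 2 = β + d + 2 by ring]
      have p1 := (poch_pos' (β + d + 1) (by positivity) j).ne'
      have p2 := (poch_pos' (β + d + 2) (by positivity) k).ne'
      field_simp
    simp_rw [← Complex.ofReal_mul, ← Complex.ofReal_sum, hS, ← Complex.ofReal_mul,
      ← Finset.mul_sum]
    congr 1
    rw [show β + ((d + n : ℕ) : ℝ) - n + 2 = β + d + 2 by push_cast; ring,
      show β + ((d + n : ℕ) : ℝ) - n + 1 = β + d + 1 by push_cast; ring,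
      show ((d + n : ℕ) : ℝ) - n + β + 2 = d + β + 2 by push_cast; ring]
    rw [pow_add]
    field_simp
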